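/- For every ε with 0 < ε < 1/3 there exist a constant C(ε) > 0, an integer q₁ > 1, and a primitive quadratic Dirichlet character χ₁ mod q₁, such that for every integer q₂ > 1 and every primitive quadratic Dirichlet character χ₂ mod q₂, the residue λ = L(1,χ₁)·L(1,χ₂)·L(1,χ₁χ₂) satisfies λ > C(ε)·q₂^(−2ε). -/

import Mathlib

open DirichletCharacter

/-!
Goldfeld's argument. The Dirichlet series of `f` has nonnegative coefficients, so
`f(s) - λ/(s-1)` has Taylor coefficients `(-1)ᵐ (bₘ - λ)` at `s = 2` with `bₘ ≥ 0` and `b₀ ≥ 1`,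
while summation by parts bounds this entire function by a multiple of `(q₁q₂)²` on a circle
`|s - 2| = R` with `1 < R < 2`. Truncating the Taylor series at a real `β < 1` with `f(β) ≤ 0`
therefore forces `λ ≫ (q₁q₂)^(-2ε)`, where `ε → 0` as `β → 1`. Siegel's alternative supplies `β` and
`χ₁`: if some quadratic `L(s, χ)` has a real zero `β` near `1`, take `χ₁ = χ`, so that `f(β) = 0`
whatever `χ₂` is; if there is none, `f` is negative just to the left of its pole for every choice of
characters.

In the diagonal case `χ₂ = χ₁` the function `L(s, χ₁χ₂)` has a pole at `1`, and Mathlib's finite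
value there, which turns out to be positive, enters `λ`.
-/

namespace Goldfeld

open Complex Filter Set MeasureTheory Topology Asymptotics
open scoped ComplexConjugate

section PartialSums

variable {M : Type*} [AddCommMonoid M] {q : ℕ} [NeZero q]

lemma sum_range_natCast_zmod (Φ : ZMod q → M) : ∑ i ∈ Finset.range q, Φ i = ∑ a, Φ a :=
  Finset.sum_bij' (fun i _ ↦ (i : ZMod q)) (fun a _ ↦ a.val) (by simp)
    (fun a _ ↦ by simpa using a.val_lt) (fun i hi ↦ ZMod.val_cast_of_lt (Finset.mem_range.mp hi))
    (by simp) (fun _ _ ↦ rfl)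

lemma sum_range_mul_natCast_zmod (Φ : ZMod q → M) (k : ℕ) :
    ∑ i ∈ Finset.range (q * k), Φ i = k • ∑ a, Φ a := by
  induction k with
  | zero => simp
  | succ k ih =>
    rw [mul_add_one, Finset.sum_range_add, ih, succ_nsmul]
    simp [sum_range_natCast_zmod]

lemma norm_sum_range_natCast_zmod_le {E : Type*} [SeminormedAddCommGroup E] {Φ : ZMod q → E}
    (hΦ : ∑ a, Φ a = 0) (n : ℕ) : ‖∑ i ∈ Finset.range n, Φ i‖ ≤ ∑ a, ‖Φ a‖ := by
  have hmod : ∑ i ∈ Finset.range n, Φ i = ∑ i ∈ Finset.range (n % q), Φ i := by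
    conv_lhs => rw [← Nat.div_add_mod n q, Finset.sum_range_add, sum_range_mul_natCast_zmod, hΦ]
    simp
  calc ‖∑ i ∈ Finset.range n, Φ i‖
      ≤ ∑ i ∈ Finset.range (n % q), ‖Φ i‖ := hmod ▸ norm_sum_le _ _
    _ ≤ ∑ i ∈ Finset.range q, ‖Φ i‖ :=
        Finset.sum_le_sum_of_subset_of_nonneg
          (Finset.range_mono (Nat.mod_lt n (NeZero.pos q)).le) fun _ _ _ ↦ norm_nonneg _
    _ = ∑ a, ‖Φ a‖ := sum_range_natCast_zmod fun a ↦ ‖Φ a‖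

lemma norm_sum_Icc_natCast_zmod_le {E : Type*} [SeminormedAddCommGroup E] {Φ : ZMod q → E}
    (hΦ : ∑ a, Φ a = 0) (n : ℕ) : ‖∑ k ∈ Finset.Icc 1 n, Φ k‖ ≤ ∑ a, ‖Φ a‖ := by
  have hshift : ∑ k ∈ Finset.Icc 1 n, Φ k = ∑ i ∈ Finset.range n, Φ (i + 1) := by
    rw [← Finset.Ico_add_one_right_eq_Icc, Finset.sum_Ico_eq_sum_range]
    simp [add_comm]
  rw [hshift, ← Equiv.sum_comp (Equiv.addRight (1 : ZMod q)) fun a ↦ ‖Φ a‖]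
  exact norm_sum_range_natCast_zmod_le (Φ := fun a ↦ Φ (a + 1))
    ((Equiv.sum_comp (Equiv.addRight (1 : ZMod q)) Φ).trans hΦ) n

end PartialSums

section AbelSummation

variable {S : ℝ → ℂ} {B : ℝ}

lemma integral_Ioi_one_mul_cpow_eq_mellin (S : ℝ → ℂ) (s : ℂ) :
    ∫ t in Ioi (1 : ℝ), S t * (t : ℂ) ^ (-(s + 1)) = mellin ((Ioi 1).indicator S) (-s) := by
  have hind (t : ℝ) : (t : ℂ) ^ (-s - 1) • (Ioi 1).indicator S t =
      (Ioi 1).indicator (fun t ↦ S t * (t : ℂ) ^ (-(s + 1))) t := by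
    by_cases ht : t ∈ Ioi (1 : ℝ) <;> simp [ht, mul_comm, add_comm, sub_eq_add_neg]
  simp_rw [mellin, hind]
  rw [setIntegral_indicator measurableSet_Ioi, Ioi_inter_Ioi, sup_eq_right.mpr zero_le_one]

lemma differentiableAt_integral_Ioi_one_mul_cpow (hS : Measurable S) (hB : ∀ t, ‖S t‖ ≤ B)
    {s : ℂ} (hs : 0 < s.re) :
    DifferentiableAt ℂ (fun s : ℂ ↦ ∫ t in Ioi (1 : ℝ), S t * (t : ℂ) ^ (-(s + 1))) s := by
  set g : ℝ → ℂ := (Ioi 1).indicator S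
  have hgB (t : ℝ) : ‖g t‖ ≤ B := (norm_indicator_le_norm_self _ _).trans (hB t)
  have hmellin : DifferentiableAt ℂ (mellin g) (-s) := by
    refine mellin_differentiableAt_of_isBigO_rpow (a := 0) (b := -s.re - 1) ?_ ?_ (by simpa) ?_
      (by simp)
    · refine ((locallyIntegrable_const B).mono
        (hS.indicator measurableSet_Ioi).aestronglyMeasurable ?_).locallyIntegrableOn _
      exact .of_forall fun t ↦ (hgB t).trans (le_abs_self B)
    · exact .of_bound B (.of_forall fun t ↦ by simpa using hgB t)
    · have hzero : g =ᶠ[𝓝[>] 0] 0 := by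
        filter_upwards [nhdsWithin_le_nhds (eventually_lt_nhds one_pos)] with t ht
        exact indicator_of_notMem (by simp [ht.le]) _
      exact hzero.trans_isBigO (isBigO_zero _ _)
  simp_rw [integral_Ioi_one_mul_cpow_eq_mellin]
  exact hmellin.comp s differentiable_neg.differentiableAt

lemma norm_integral_Ioi_one_mul_cpow_le (hB : ∀ t, ‖S t‖ ≤ B) {s : ℂ} (hs : 0 < s.re) :
    ‖∫ t in Ioi (1 : ℝ), S t * (t : ℂ) ^ (-(s + 1))‖ ≤ B / s.re := by
  calc _ ≤ ∫ t in Ioi (1 : ℝ), B * t ^ (-(s.re + 1)) := by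
        refine norm_integral_le_of_norm_le
          ((integrableOn_Ioi_rpow_of_lt (by linarith) one_pos).const_mul B) ?_
        filter_upwards [ae_restrict_mem measurableSet_Ioi] with t ht
        rw [norm_mul, norm_cpow_eq_rpow_re_of_pos (one_pos.trans ht)]
        exact mul_le_mul_of_nonneg_right (hB t) (Real.rpow_nonneg (one_pos.trans ht).le _)
    _ = B / s.re := by
        rw [integral_const_mul, integral_Ioi_rpow_of_lt (by linarith) one_pos, Real.one_rpow,
          neg_add_rev, neg_add_cancel_comm, neg_div_neg_eq, mul_one_div]

variable {q : ℕ} [NeZero q] {Φ : ZMod q → ℂ} {s : ℂ}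

lemma zmodLFunction_eq_mul_integral (hΦ : ∑ a, Φ a = 0) (hs : 0 < s.re) :
    ZMod.LFunction Φ s =
      s * ∫ t in Ioi (1 : ℝ), (∑ k ∈ Finset.Icc 1 ⌊t⌋₊, Φ k) * (t : ℂ) ^ (-(s + 1)) := by
  have hbound (t : ℝ) := norm_sum_Icc_natCast_zmod_le hΦ ⌊t⌋₊
  have hmeas : Measurable fun t : ℝ ↦ ∑ k ∈ Finset.Icc 1 ⌊t⌋₊, Φ k :=
    (measurable_from_nat (f := fun n ↦ ∑ k ∈ Finset.Icc 1 n, Φ k)).comp Nat.measurable_floor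
  have hopen : IsOpen {s : ℂ | 0 < s.re} := isOpen_lt continuous_const continuous_re
  have hL : AnalyticOnNhd ℂ (ZMod.LFunction Φ) {s | 0 < s.re} :=
    (ZMod.differentiable_LFunction_of_sum_zero hΦ).differentiableOn.analyticOnNhd hopen
  have hI : AnalyticOnNhd ℂ (fun s : ℂ ↦ s * ∫ t in Ioi (1 : ℝ),
      (∑ k ∈ Finset.Icc 1 ⌊t⌋₊, Φ k) * (t : ℂ) ^ (-(s + 1))) {s | 0 < s.re} :=
    DifferentiableOn.analyticOnNhd (fun z hz ↦ (differentiableAt_id.mul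
      (differentiableAt_integral_Ioi_one_mul_cpow hmeas hbound hz)).differentiableWithinAt) hopen
  refine hL.eqOn_of_preconnected_of_eventuallyEq hI (convex_halfSpace_re_gt 0).isPreconnected
    (z₀ := 2) (by simp) ?_ hs
  filter_upwards [(isOpen_lt continuous_const continuous_re).mem_nhds
    (show 1 < (2 : ℂ).re by simp)] with z hz
  rw [ZMod.LFunction_eq_LSeries Φ hz]
  refine LSeries_eq_mul_integral _ le_rfl (one_pos.trans hz)
    (ZMod.LSeriesSummable_of_one_lt_re Φ hz) (.of_bound (∑ a, ‖Φ a‖) (.of_forall fun n ↦ ?_))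
  simpa using norm_sum_Icc_natCast_zmod_le hΦ n

lemma norm_zmodLFunction_le (hΦ : ∑ a, Φ a = 0) (hs : 0 < s.re) :
    ‖ZMod.LFunction Φ s‖ ≤ ‖s‖ / s.re * ∑ a, ‖Φ a‖ := by
  rw [zmodLFunction_eq_mul_integral hΦ hs, norm_mul, div_mul_eq_mul_div, mul_div_assoc]
  gcongr
  exact norm_integral_Ioi_one_mul_cpow_le (fun t ↦ norm_sum_Icc_natCast_zmod_le hΦ ⌊t⌋₊) hs

lemma norm_LFunction_le {χ : DirichletCharacter ℂ q} (hχ : χ ≠ 1) (hs : 0 < s.re) :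
    ‖χ.LFunction s‖ ≤ ‖s‖ / s.re * q := by
  refine (norm_zmodLFunction_le (MulChar.sum_eq_zero_of_ne_one hχ) hs).trans ?_
  gcongr
  calc ∑ a, ‖χ a‖ ≤ ∑ _a : ZMod q, (1 : ℝ) := Finset.sum_le_sum fun a _ ↦ χ.norm_le_one a
    _ = q := by simp [ZMod.card]

end AbelSummation

section Conjugation

lemma conj_apply_of_sq_eq_one {q : ℕ} {χ : DirichletCharacter ℂ q} (hχ : χ ^ 2 = 1) (a : ZMod q) :
    conj (χ a) = χ a := by
  rcases MulChar.isQuadratic_iff_sq_eq_one.mpr hχ a with h | h | h <;> simp [h]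

variable {q : ℕ} [NeZero q]

lemma zmodLFunction_conj {Φ : ZMod q → ℂ} (hΦ : ∑ a, Φ a = 0) (s : ℂ) :
    ZMod.LFunction (fun a ↦ conj (Φ a)) s = conj (ZMod.LFunction Φ (conj s)) := by
  have hΦ' : ∑ a, conj (Φ a) = 0 := by rw [← map_sum, hΦ, map_zero]
  have hentire : Differentiable ℂ fun z ↦ conj (ZMod.LFunction Φ (conj z)) := fun z ↦
    differentiableAt_conj_conj_iff.mpr (ZMod.differentiable_LFunction_of_sum_zero hΦ _)
  refine congrFun ((ZMod.differentiable_LFunction_of_sum_zero hΦ').differentiableOn.analyticOnNhd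
    isOpen_univ |>.eq_of_eventuallyEq (hentire.differentiableOn.analyticOnNhd isOpen_univ)
    (z₀ := 2) ?_) s
  filter_upwards [(isOpen_lt continuous_const continuous_re).mem_nhds
    (show 1 < (2 : ℂ).re by simp)] with z hz
  rw [ZMod.LFunction_eq_LSeries _ hz, ZMod.LFunction_eq_LSeries Φ (by rwa [conj_re]), LSeries,
    LSeries, conj_tsum]
  refine tsum_congr fun n ↦ ?_
  rcases eq_or_ne n 0 with rfl | hn
  · simp
  · rw [LSeries.term_of_ne_zero hn, LSeries.term_of_ne_zero hn, map_div₀,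
      ← conj_cpow _ _ (by rw [natCast_arg]; positivity), conj_natCast]

lemma ofReal_re_LFunction {χ : DirichletCharacter ℂ q} (hχ : χ ≠ 1) (hχ2 : χ ^ 2 = 1) (x : ℝ) :
    ((χ.LFunction x).re : ℂ) = χ.LFunction x := by
  refine conj_eq_iff_re.mp ?_
  have hconj := zmodLFunction_conj (MulChar.sum_eq_zero_of_ne_one hχ) (x : ℂ)
  simp_rw [conj_apply_of_sq_eq_one hχ2, conj_ofReal] at hconj
  exact hconj.symm

end Conjugation

section ProductCharacter

variable {q₁ q₂ : ℕ}

/-- The product `χ₁χ₂` as a character modulo `q₁q₂`; unlike `DirichletCharacter.mul`, which lives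
modulo `lcm q₁ q₂`. -/
noncomputable abbrev prodChar (χ₁ : DirichletCharacter ℂ q₁) (χ₂ : DirichletCharacter ℂ q₂) :
    DirichletCharacter ℂ (q₁ * q₂) :=
  changeLevel (dvd_mul_right q₁ q₂) χ₁ * changeLevel (dvd_mul_left q₂ q₁) χ₂

lemma prodChar_natCast (χ₁ : DirichletCharacter ℂ q₁) (χ₂ : DirichletCharacter ℂ q₂) (n : ℕ) :
    prodChar χ₁ χ₂ n = χ₁ n * χ₂ n := by
  have hcop (N : ℕ) : IsCoprime (n : ℤ) N ↔ n.Coprime N := Nat.isCoprime_iff_coprime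
  have hzero {N : ℕ} (χ : DirichletCharacter ℂ N) (h : ¬ n.Coprime N) : χ n = 0 := by
    simpa using (apply_eq_zero_iff χ (n : ℤ)).mpr ((hcop N).not.mpr h)
  by_cases h : n.Coprime (q₁ * q₂)
  · have h₁ := changeLevel_eq_cast_of_dvd' χ₁ (dvd_mul_right q₁ q₂) ((hcop _).mpr h)
    have h₂ := changeLevel_eq_cast_of_dvd' χ₂ (dvd_mul_left q₂ q₁) ((hcop _).mpr h)
    rw [Int.cast_natCast] at h₁ h₂
    rw [MulChar.mul_apply, h₁, h₂, Int.cast_natCast, Int.cast_natCast]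
  · rw [hzero _ h]
    rcases not_and_or.mp (Nat.coprime_mul_iff_right.not.mp h) with h' | h' <;> simp [hzero _ h']

lemma prodChar_sq {χ₁ : DirichletCharacter ℂ q₁} {χ₂ : DirichletCharacter ℂ q₂}
    (h₁ : χ₁ ^ 2 = 1) (h₂ : χ₂ ^ 2 = 1) : prodChar χ₁ χ₂ ^ 2 = 1 := by
  rw [mul_pow, ← map_pow, ← map_pow, h₁, h₂, map_one, map_one, one_mul]

/-- The product `L(s, χ₁) L(s, χ₂) L(s, χ₁χ₂)`; its value at `s = 1` is the residue `λ` of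
`f(s) = ζ(s) L(s, χ₁) L(s, χ₂) L(s, χ₁χ₂)`. -/
noncomputable def LFunctionProd [NeZero q₁] [NeZero q₂] (χ₁ : DirichletCharacter ℂ q₁)
    (χ₂ : DirichletCharacter ℂ q₂) (s : ℂ) : ℂ :=
  χ₁.LFunction s * χ₂.LFunction s * (prodChar χ₁ χ₂).LFunction s

end ProductCharacter

section Coefficients

open ArithmeticFunction
open scoped ArithmeticFunction.zeta ComplexOrder

lemma nonneg_of_nonneg_prime_pow {R : Type*} [CommSemiring R] [PartialOrder R]
    [IsOrderedRing R] {f : ArithmeticFunction R} (hf : f.IsMultiplicative)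
    (hpow : ∀ p k : ℕ, p.Prime → 0 ≤ f (p ^ k)) (n : ℕ) : 0 ≤ f n := by
  rcases eq_or_ne n 0 with rfl | hn
  · simp
  rw [hf.multiplicative_factorization _ hn]
  exact Finset.prod_nonneg fun p hp ↦ hpow _ _ (Nat.prime_of_mem_primeFactors hp)

lemma mul_prime_pow_nonneg {R : Type*} [Semiring R] [PartialOrder R] [IsOrderedRing R]
    {f g : ArithmeticFunction R} {p : ℕ} (hp : p.Prime)
    (hf : ∀ i, 0 ≤ f (p ^ i)) (hg : ∀ i, 0 ≤ g (p ^ i)) (k : ℕ) : 0 ≤ (f * g) (p ^ k) := by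
  rw [mul_apply]
  refine Finset.sum_nonneg fun x hx ↦ ?_
  have hx' : x.1 * x.2 = p ^ k := (Nat.mem_divisorsAntidiagonal.mp hx).1
  obtain ⟨i, -, hi⟩ := (Nat.dvd_prime_pow hp).mp (Dvd.intro _ hx')
  obtain ⟨j, -, hj⟩ := (Nat.dvd_prime_pow hp).mp (Dvd.intro_left _ hx')
  rw [hi, hj]
  exact mul_nonneg (hf i) (hg j)

variable {q₁ q₂ q : ℕ}

/-- The Dirichlet coefficients `n ↦ χ n` of `L(s, χ)`. -/
noncomputable abbrev charCoeff (χ : DirichletCharacter ℂ q) : ArithmeticFunction ℂ :=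
  toArithmeticFunction (χ ·)

lemma pmul_charCoeff_mul (χ : DirichletCharacter ℂ q) (f g : ArithmeticFunction ℂ) :
    (charCoeff χ).pmul (f * g) = (charCoeff χ).pmul f * (charCoeff χ).pmul g := by
  ext n
  rw [pmul_apply, mul_apply, mul_apply, Finset.mul_sum]
  refine Finset.sum_congr rfl fun x hx ↦ ?_
  obtain ⟨rfl, hn⟩ := Nat.mem_divisorsAntidiagonal.mp hx
  obtain ⟨h₁, h₂⟩ := mul_ne_zero_iff.mp hn
  simp only [pmul_apply, ← apply_eq_toArithmeticFunction_apply _ hn,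
    ← apply_eq_toArithmeticFunction_apply _ h₁, ← apply_eq_toArithmeticFunction_apply _ h₂,
    Nat.cast_mul, map_mul]
  ring

lemma charCoeff_prodChar (χ₁ : DirichletCharacter ℂ q₁) (χ₂ : DirichletCharacter ℂ q₂) :
    charCoeff (prodChar χ₁ χ₂) = (charCoeff χ₁).pmul (charCoeff χ₂) := by
  ext n
  rcases eq_or_ne n 0 with rfl | hn
  · simp
  · simp only [pmul_apply, ← apply_eq_toArithmeticFunction_apply _ hn, prodChar_natCast]

lemma charCoeff_mul_charCoeff_prodChar (χ₁ : DirichletCharacter ℂ q₁)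
    (χ₂ : DirichletCharacter ℂ q₂) :
    charCoeff χ₁ * charCoeff (prodChar χ₁ χ₂) = (charCoeff χ₁).pmul (zetaMul χ₂) := by
  rw [zetaMul, pmul_charCoeff_mul, pmul_zeta, charCoeff_prodChar]

/-- The Dirichlet coefficients of `f(s) = ζ(s) L(s, χ₁) L(s, χ₂) L(s, χ₁χ₂)`. -/
noncomputable def goldfeldCoeff (χ₁ : DirichletCharacter ℂ q₁) (χ₂ : DirichletCharacter ℂ q₂) :
    ArithmeticFunction ℂ :=
  ζ * charCoeff χ₁ * charCoeff χ₂ * charCoeff (prodChar χ₁ χ₂)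

variable (χ₁ : DirichletCharacter ℂ q₁) (χ₂ : DirichletCharacter ℂ q₂)

lemma goldfeldCoeff_eq_zetaMul_left :
    goldfeldCoeff χ₁ χ₂ = zetaMul χ₂ * (charCoeff χ₁).pmul (zetaMul χ₂) := by
  rw [← charCoeff_mul_charCoeff_prodChar, goldfeldCoeff, zetaMul]
  ring

lemma goldfeldCoeff_comm : goldfeldCoeff χ₁ χ₂ = goldfeldCoeff χ₂ χ₁ := by
  rw [goldfeldCoeff, goldfeldCoeff, charCoeff_prodChar, charCoeff_prodChar χ₂, pmul_comm]
  ring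

lemma isMultiplicative_goldfeldCoeff : (goldfeldCoeff χ₁ χ₂).IsMultiplicative :=
  ((isMultiplicative_zetaMul χ₁).mul (isMultiplicative_toArithmeticFunction χ₂)).mul
    (isMultiplicative_toArithmeticFunction _)

lemma charCoeff_prime_pow (χ : DirichletCharacter ℂ q) {p : ℕ} (hp : p.Prime) (k : ℕ) :
    charCoeff χ (p ^ k) = χ p ^ k := by
  rw [← apply_eq_toArithmeticFunction_apply _ (pow_ne_zero k hp.ne_zero), Nat.cast_pow, map_pow]

lemma zetaMul_prime_pow_eq_zero_of_odd {χ : DirichletCharacter ℂ q} {p : ℕ} (hp : p.Prime)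
    (hχ : χ p = -1) {k : ℕ} (hk : Odd k) : zetaMul χ (p ^ k) = 0 := by
  rw [zetaMul, coe_zeta_mul_apply, Nat.sum_divisors_prime_pow hp,
    Finset.sum_congr rfl fun i _ ↦ charCoeff_prime_pow χ hp i, hχ, neg_one_geom_sum,
    if_pos hk.add_one]

variable {χ₁ χ₂}

lemma pmul_zetaMul_prime_pow_nonneg (h₁ : χ₁ ^ 2 = 1) (h₂ : χ₂ ^ 2 = 1) {p : ℕ} (hp : p.Prime)
    (h : 0 ≤ χ₁ p ∨ χ₂ p = -1) (k : ℕ) : 0 ≤ (charCoeff χ₁).pmul (zetaMul χ₂) (p ^ k) := by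
  rw [pmul_apply, charCoeff_prime_pow χ₁ hp]
  rcases h with hpos | hneg
  · exact mul_nonneg (pow_nonneg hpos k) (zetaMul_nonneg h₂ _)
  rcases k.even_or_odd' with ⟨j, rfl | rfl⟩
  · refine mul_nonneg ?_ (zetaMul_nonneg h₂ _)
    rw [pow_mul]
    rcases MulChar.isQuadratic_iff_sq_eq_one.mpr h₁ p with h | h | h <;> simp [h]
  · rw [zetaMul_prime_pow_eq_zero_of_odd hp hneg (odd_two_mul_add_one j), mul_zero]

-- If `χ₂(p) = -1`, then `zetaMul χ₂` is supported on even powers of `p`, where twisting by `χ₁` is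
-- harmless; if `χ₂(p) ≥ 0`, twisting `zetaMul χ₁` by `χ₂` is.
lemma goldfeldCoeff_nonneg (h₁ : χ₁ ^ 2 = 1) (h₂ : χ₂ ^ 2 = 1) (n : ℕ) :
    0 ≤ goldfeldCoeff χ₁ χ₂ n := by
  refine nonneg_of_nonneg_prime_pow (isMultiplicative_goldfeldCoeff χ₁ χ₂) (fun p k hp ↦ ?_) n
  by_cases hneg : χ₂ p = -1
  · rw [goldfeldCoeff_eq_zetaMul_left]
    exact mul_prime_pow_nonneg hp (fun i ↦ zetaMul_nonneg h₂ _)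
      (pmul_zetaMul_prime_pow_nonneg h₁ h₂ hp (.inr hneg)) k
  · have hpos : 0 ≤ χ₂ p := by
      rcases MulChar.isQuadratic_iff_sq_eq_one.mpr h₂ p with h | h | h <;> simp_all
    rw [goldfeldCoeff_comm, goldfeldCoeff_eq_zetaMul_left]
    exact mul_prime_pow_nonneg hp (fun i ↦ zetaMul_nonneg h₁ _)
      (pmul_zetaMul_prime_pow_nonneg h₂ h₁ hp (.inl hpos)) k

variable (χ₁ χ₂)
variable [NeZero q₁] [NeZero q₂] [NeZero q] {s : ℂ}

lemma LSeriesHasSum_charCoeff (χ : DirichletCharacter ℂ q) (hs : 1 < s.re) :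
    LSeriesHasSum (charCoeff χ) s (χ.LFunction s) := by
  rw [χ.LFunction_eq_LSeries hs,
    ← LSeriesHasSum_congr (f := (χ ·)) s _ χ.apply_eq_toArithmeticFunction_apply]
  exact (χ.LSeriesSummable_of_one_lt_re hs).LSeriesHasSum

lemma LSeriesHasSum_goldfeldCoeff (hs : 1 < s.re) :
    LSeriesHasSum (goldfeldCoeff χ₁ χ₂) s (riemannZeta s * LFunctionProd χ₁ χ₂ s) := by
  have hζ : LSeriesHasSum (ζ : ArithmeticFunction ℂ) s (riemannZeta s) := by
    convert LSeriesHasSum_zeta hs using 2 with n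
    exact natCoe_apply
  rw [LFunctionProd, ← mul_assoc, ← mul_assoc]
  exact LSeriesHasSum_mul (LSeriesHasSum_mul (LSeriesHasSum_mul hζ (LSeriesHasSum_charCoeff χ₁ hs))
    (LSeriesHasSum_charCoeff χ₂ hs)) (LSeriesHasSum_charCoeff (prodChar χ₁ χ₂) hs)

lemma abscissaOfAbsConv_goldfeldCoeff_le :
    LSeries.abscissaOfAbsConv (goldfeldCoeff χ₁ χ₂) ≤ (1 : ℝ) :=
  LSeries.abscissaOfAbsConv_le_of_forall_lt_LSeriesSummable fun y hy ↦
    (LSeriesHasSum_goldfeldCoeff χ₁ χ₂ (s := y) (by simpa using hy)).LSeriesSummable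

lemma apply_one_le_LSeries {a : ℕ → ℂ} (ha : ∀ n, 0 ≤ a n) {x : ℝ} (hx : LSeriesSummable a x) :
    a 1 ≤ LSeries a x := by
  simpa [LSeries, LSeries.term_def] using hx.le_tsum 1 fun n _ ↦ LSeries.term_nonneg (ha n) x

end Coefficients

section Landau

open Metric
open scoped Nat ComplexOrder

section Taylor

variable {G : ℂ → ℂ} {c z : ℂ} {d : ℕ → ℂ} {Q R : ℝ}

lemma hasSum_of_iteratedDeriv_eq (hG : Differentiable ℂ G)
    (hd : ∀ m, iteratedDeriv m G c = (-1) ^ m * m ! * d m) (z : ℂ) :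
    HasSum (fun m ↦ d m * (c - z) ^ m) (G z) := by
  refine (Complex.hasSum_taylorSeries_of_entire hG c z).congr_fun fun m ↦ ?_
  have hfac : (m ! : ℂ) ≠ 0 := mod_cast m.factorial_ne_zero
  have hsign : (-1 : ℂ) ^ m * (-1) ^ m = 1 := by simp [← mul_pow]
  rw [hd m, smul_eq_mul, smul_eq_mul, ← neg_sub c z, neg_pow (c - z)]
  field_simp
  linear_combination -d m * (c - z) ^ m * hsign

lemma norm_le_div_pow_of_iteratedDeriv_eq (hG : Differentiable ℂ G)
    (hd : ∀ m, iteratedDeriv m G c = (-1) ^ m * m ! * d m) (hR : 0 < R)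
    (hQ : ∀ z ∈ sphere c R, ‖G z‖ ≤ Q) (m : ℕ) : ‖d m‖ ≤ Q / R ^ m := by
  have hcauchy := Complex.norm_iteratedDeriv_le_of_forall_mem_sphere_norm_le m hR
    hG.diffContOnCl hQ
  rw [hd m, norm_mul, norm_mul, norm_pow, norm_neg, norm_one, one_pow, one_mul,
    Complex.norm_natCast, mul_div_assoc] at hcauchy
  exact le_of_mul_le_mul_left hcauchy (by positivity)

lemma norm_sum_range_sub_le_of_iteratedDeriv_eq (hG : Differentiable ℂ G)
    (hd : ∀ m, iteratedDeriv m G c = (-1) ^ m * m ! * d m) (hzR : ‖c - z‖ < R)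
    (hQ : ∀ z ∈ sphere c R, ‖G z‖ ≤ Q) (M : ℕ) :
    ‖∑ m ∈ Finset.range M, d m * (c - z) ^ m - G z‖ ≤
      Q * (‖c - z‖ / R) ^ M / (1 - ‖c - z‖ / R) := by
  have hR : 0 < R := (norm_nonneg _).trans_lt hzR
  refine norm_sub_le_of_geometric_bound_of_hasSum ((div_lt_one hR).mpr hzR) (fun m ↦ ?_)
    (hasSum_of_iteratedDeriv_eq hG hd z) M
  rw [norm_mul, norm_pow, div_pow, mul_div_left_comm, mul_comm]
  gcongr
  exact norm_le_div_pow_of_iteratedDeriv_eq hG hd hR hQ m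

end Taylor

variable {a : ℕ → ℂ} {H : ℂ → ℂ} {lam : ℝ}

lemma exists_iteratedDeriv_LSeries_eq (ha : ∀ n, 0 ≤ a n) {x : ℝ}
    (hx : LSeries.abscissaOfAbsConv a < x) (m : ℕ) :
    ∃ b : ℝ, 0 ≤ b ∧ iteratedDeriv m (LSeries a) x = (-1) ^ m * m ! * b := by
  have hnonneg := LSeries.iteratedDeriv_alternating ha hx m
  have hsign : (-1 : ℂ) ^ m * (-1) ^ m = 1 := by simp [← mul_pow]
  have hfac : (m ! : ℂ) ≠ 0 := mod_cast m.factorial_ne_zero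
  refine ⟨((-1) ^ m * iteratedDeriv m (LSeries a) x).re / m !,
    div_nonneg (Complex.le_def.mp hnonneg).1 (by positivity), ?_⟩
  rw [ofReal_div, ← Complex.eq_re_of_ofReal_le hnonneg, ofReal_natCast, mul_assoc,
    mul_div_cancel₀ _ hfac, ← mul_assoc, hsign, one_mul]

lemma dslope_one_eq_LSeries_sub (hH1 : H 1 = lam)
    (hHa : ∀ s : ℂ, 1 < s.re → H s = (s - 1) * LSeries a s) {s : ℂ} (hs : 1 < s.re) :
    dslope H 1 s = LSeries a s - lam * (s - 1)⁻¹ := by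
  have hs1 : s - 1 ≠ 0 := sub_ne_zero.mpr fun h ↦ by simp [h] at hs
  rw [dslope_of_ne _ (sub_ne_zero.mp hs1), slope_def_field, hH1, hHa s hs]
  field_simp

lemma iteratedDeriv_dslope_one_eq (hH : Differentiable ℂ (dslope H 1)) (hH1 : H 1 = lam)
    (hHa : ∀ s : ℂ, 1 < s.re → H s = (s - 1) * LSeries a s) (m : ℕ) :
    iteratedDeriv m (dslope H 1) 2 =
      iteratedDeriv m (LSeries a) 2 - (-1) ^ m * m ! * lam := by
  have hsum : LSeries a =ᶠ[𝓝 2] dslope H 1 + fun s ↦ (lam : ℂ) * (1 * s - 1)⁻¹ := by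
    filter_upwards [(isOpen_lt continuous_const continuous_re).mem_nhds
      (show 1 < (2 : ℂ).re by simp)] with z hz
    rw [Pi.add_apply, dslope_one_eq_LSeries_sub hH1 hHa hz, one_mul, sub_add_cancel]
  have hinv : ContDiffAt ℂ m (fun s : ℂ ↦ (lam : ℂ) * (1 * s - 1)⁻¹) 2 :=
    contDiffAt_const.mul (ContDiffAt.inv (by fun_prop) (by norm_num))
  rw [hsum.iteratedDeriv_eq, iteratedDeriv_add hH.contDiff.contDiffAt hinv,
    iteratedDeriv_const_mul_field,
    iteratedDeriv_eq_iterate (n := m) (f := fun s : ℂ ↦ (1 * s - 1)⁻¹), iter_deriv_inv_linear_sub]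
  norm_num
  ring

lemma exists_iteratedDeriv_dslope_one_eq (ha : ∀ n, 0 ≤ a n)
    (hconv : LSeries.abscissaOfAbsConv a ≤ (1 : ℝ)) (hH : Differentiable ℂ (dslope H 1))
    (hH1 : H 1 = lam) (hHa : ∀ s : ℂ, 1 < s.re → H s = (s - 1) * LSeries a s) :
    ∃ b : ℕ → ℝ, (∀ m, 0 ≤ b m) ∧ (b 0 : ℂ) = LSeries a 2 ∧
      ∀ m, iteratedDeriv m (dslope H 1) 2 = (-1) ^ m * m ! * (b m - lam) := by
  have hconv2 : LSeries.abscissaOfAbsConv a < (2 : ℝ) :=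
    hconv.trans_lt (mod_cast one_lt_two)
  choose b hb hba using exists_iteratedDeriv_LSeries_eq ha hconv2
  rw [ofReal_ofNat] at hba
  refine ⟨b, hb, by simpa using (hba 0).symm, fun m ↦ ?_⟩
  rw [iteratedDeriv_dslope_one_eq hH hH1 hHa, hba, mul_sub]

lemma one_sub_geom_le_sum_mul_pow {b : ℕ → ℝ} (hb : ∀ m, 0 ≤ b m) (hb0 : 1 ≤ b 0) (lam : ℝ)
    {y : ℝ} (hy : 1 < y) {M : ℕ} (hM : M ≠ 0) :
    1 - lam * ((y ^ M - 1) / (y - 1)) ≤ ∑ m ∈ Finset.range M, (b m - lam) * y ^ m := by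
  have hfirst : b 0 * y ^ 0 ≤ ∑ m ∈ Finset.range M, b m * y ^ m :=
    Finset.single_le_sum (f := fun m ↦ b m * y ^ m)
      (fun m _ ↦ mul_nonneg (hb m) (by positivity)) (Finset.mem_range.mpr hM.pos)
  simp_rw [sub_mul, Finset.sum_sub_distrib, ← Finset.mul_sum, geom_sum_eq hy.ne']
  linarith

-- At `s = β` the first `M` terms of the Taylor series of `dslope H 1` at `2` contribute at least
-- `1 - lam * ((2 - β) ^ M - 1) / (1 - β)`, and Cauchy's estimates control the rest.
theorem one_sub_le_residue_mul (ha : ∀ n, 0 ≤ a n) (ha2 : 1 ≤ LSeries a 2)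
    (hconv : LSeries.abscissaOfAbsConv a ≤ (1 : ℝ)) (hH : Differentiable ℂ H) (hH1 : H 1 = lam)
    (hHa : ∀ s : ℂ, 1 < s.re → H s = (s - 1) * LSeries a s) {β Q R : ℝ} (hβ : β < 1)
    (hβR : 2 - β < R) (hHβ : 0 ≤ (H β).re) (hQ : ∀ z ∈ sphere 2 R, ‖dslope H 1 z‖ ≤ Q)
    {M : ℕ} (hM : M ≠ 0) :
    1 - Q * ((2 - β) / R) ^ M / (1 - (2 - β) / R) ≤ lam * (2 - β) ^ M / (1 - β) := by
  have hG : Differentiable ℂ (dslope H 1) := differentiableOn_univ.mp <|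
    (Complex.differentiableOn_dslope univ_mem).mpr hH.differentiableOn
  obtain ⟨b, hb, hb0, hbG⟩ := exists_iteratedDeriv_dslope_one_eq ha hconv hG hH1 hHa
  have hmain := one_sub_geom_le_sum_mul_pow hb (M := M) (by exact_mod_cast hb0 ▸ ha2) lam
    (by linarith : 1 < 2 - β) hM
  have hnorm : ‖(2 : ℂ) - β‖ = 2 - β := by
    rw [← ofReal_ofNat, ← ofReal_sub, Complex.norm_of_nonneg (by linarith)]
  have htail := norm_sum_range_sub_le_of_iteratedDeriv_eq hG hbG (z := β) (hnorm ▸ hβR) hQ M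
  rw [hnorm] at htail
  have hre : (∑ m ∈ Finset.range M, ((b m : ℂ) - lam) * (2 - β) ^ m).re =
      ∑ m ∈ Finset.range M, (b m - lam) * (2 - β) ^ m := by
    exact_mod_cast ofReal_re (∑ m ∈ Finset.range M, (b m - lam) * (2 - β) ^ m)
  have hlower := (re_le_norm _).trans htail
  rw [sub_re, hre] at hlower
  have hGβ : (dslope H 1 β).re = (lam - (H β).re) / (1 - β) := by
    rw [dslope_of_ne _ (mod_cast hβ.ne), slope_def_field, hH1, ← ofReal_one, ← ofReal_sub,
      div_ofReal_re, sub_re, ofReal_re, ← neg_div_neg_eq, neg_sub, neg_sub]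
  have hGβ_le : (dslope H 1 β).re ≤ lam / (1 - β) := by
    rw [hGβ]
    gcongr
    linarith
  have hsplit : lam * (2 - β) ^ M / (1 - β) =
      lam / (1 - β) + lam * (((2 - β) ^ M - 1) / (2 - β - 1)) := by
    have : (1 - β) ≠ 0 := by linarith
    rw [show 2 - β - 1 = 1 - β by ring]
    field_simp
    ring
  linarith

end Landau

section TrivialCharacter

variable {N : ℕ} [NeZero N]

lemma tendsto_zmodLFunction_sub_nhds_one (Φ : ZMod N → ℂ) :
    Tendsto (fun s ↦ ZMod.LFunction Φ s - (N : ℂ) ^ (-s) * (∑ j, Φ j) * (1 / (s - 1) / Gammaℝ s))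
      (𝓝 1) (𝓝 (ZMod.LFunction Φ 1)) := by
  have hN : Continuous fun s : ℂ ↦ (N : ℂ) ^ (-s) :=
    continuous_neg.const_cpow (.inl (NeZero.ne _))
  have hsum := tendsto_finsetSum Finset.univ fun j (_ : j ∈ Finset.univ) ↦
    (HurwitzZeta.tendsto_hurwitzZeta_sub_one_div_nhds_one (ZMod.toAddCircle j)).const_mul (Φ j)
  refine ((hN.tendsto 1).mul hsum).congr fun s ↦ ?_
  simp only [ZMod.LFunction, mul_sub, Finset.sum_sub_distrib, ← Finset.sum_mul, mul_assoc]

lemma hasDerivAt_prod_one_sub_cpow_neg {S : Finset ℕ} (hS : ∀ p ∈ S, p.Prime) :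
    HasDerivAt (fun s : ℂ ↦ ∏ p ∈ S, (1 - (p : ℂ) ^ (-s)))
      ((∏ p ∈ S, (1 - (p : ℂ)⁻¹)) * ∑ p ∈ S, log p / (p - 1)) 1 := by
  have hfactor (p : ℕ) (hp : p ∈ S) :
      HasDerivAt (fun s : ℂ ↦ 1 - (p : ℂ) ^ (-s)) (log p / p) 1 := by
    have hp0 : (p : ℂ) ≠ 0 := mod_cast (hS p hp).ne_zero
    refine (((hasDerivAt_neg (1 : ℂ)).const_cpow (.inl hp0)).const_sub 1).congr_deriv ?_
    rw [cpow_neg_one]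
    ring
  refine (HasDerivAt.fun_finsetProd hfactor).congr_deriv ?_
  rw [Finset.mul_sum]
  refine Finset.sum_congr rfl fun p hp ↦ ?_
  have hp0 : (p : ℂ) ≠ 0 := mod_cast (hS p hp).ne_zero
  have hp1 : (p : ℂ) - 1 ≠ 0 := sub_ne_zero.mpr (mod_cast (hS p hp).ne_one)
  simp_rw [cpow_neg_one, smul_eq_mul, ← Finset.prod_erase_mul _ _ hp]
  field_simp

lemma prod_primeFactors_one_sub_inv :
    ∏ p ∈ N.primeFactors, (1 - (p : ℂ)⁻¹) = N.totient / N := by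
  have h := congrArg (Rat.cast : ℚ → ℂ) (Nat.totient_eq_mul_prod_factors N)
  push_cast at h
  rw [h, mul_div_cancel_left₀ _ (NeZero.ne _)]

lemma hasDerivAt_prod_primeFactors_sub_cpow_neg :
    HasDerivAt (fun s : ℂ ↦
        ∏ p ∈ N.primeFactors, (1 - (p : ℂ) ^ (-s)) - (N : ℂ) ^ (-s) * N.totient)
      (N.totient / N * (log N + ∑ p ∈ N.primeFactors, log p / (p - 1))) 1 := by
  have hN : HasDerivAt (fun s : ℂ ↦ (N : ℂ) ^ (-s) * N.totient) _ 1 :=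
    ((hasDerivAt_neg (1 : ℂ)).const_cpow (.inl (NeZero.ne _))).mul_const _
  refine ((hasDerivAt_prod_one_sub_cpow_neg fun p hp ↦
    Nat.prime_of_mem_primeFactors hp).sub hN).congr_deriv ?_
  rw [prod_primeFactors_one_sub_inv, cpow_neg_one]
  ring

-- `L(s, 1)` has a pole at `s = 1`, where `LFunction` takes the finite value left over after
-- subtracting a multiple of `1 / ((s - 1) Gammaℝ s)` from each Hurwitz zeta function.
lemma LFunction_one_apply_one : (1 : DirichletCharacter ℂ N).LFunction 1 =
    N.totient / N * (riemannZeta 1 + (log N + ∑ p ∈ N.primeFactors, log p / (p - 1))) := by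
  set E : ℂ → ℂ := fun s ↦ ∏ p ∈ N.primeFactors, (1 - (p : ℂ) ^ (-s))
  set D : ℂ → ℂ := fun s ↦ E s - (N : ℂ) ^ (-s) * N.totient
  set g : ℂ → ℂ := fun s ↦ 1 / (s - 1) / Gammaℝ s
  have hE : ContinuousAt E 1 := (hasDerivAt_prod_one_sub_cpow_neg fun p hp ↦
    Nat.prime_of_mem_primeFactors hp).continuousAt
  have hE1 : E 1 = N.totient / N := by
    simp_rw [E, cpow_neg_one, prod_primeFactors_one_sub_inv]
  have hD : HasDerivAt D _ 1 := hasDerivAt_prod_primeFactors_sub_cpow_neg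
  have hD1 : D 1 = 0 := by
    simp only [D, hE1, cpow_neg_one]
    ring
  have hζ : Tendsto (fun s ↦ riemannZeta s - g s) (𝓝[≠] 1) (𝓝 (riemannZeta 1)) := by
    simpa only [HurwitzZeta.hurwitzZeta_zero] using
      (HurwitzZeta.tendsto_hurwitzZeta_sub_one_div_nhds_one 0).mono_left nhdsWithin_le_nhds
  have hΓ : Tendsto Gammaℝ (𝓝[≠] 1) (𝓝 1) := by
    simpa only [Gammaℝ_one] using
      hasDerivAt_Gammaℝ_one.continuousAt.tendsto.mono_left nhdsWithin_le_nhds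
  have hlim := ((hE1 ▸ hE.tendsto.mono_left nhdsWithin_le_nhds).mul hζ).add
    ((hasDerivAt_iff_tendsto_slope.mp hD).div hΓ one_ne_zero)
  rw [div_one, ← mul_add] at hlim
  refine tendsto_nhds_unique ((tendsto_zmodLFunction_sub_nhds_one _).mono_left
    nhdsWithin_le_nhds) (hlim.congr' ?_)
  filter_upwards [self_mem_nhdsWithin] with s hs
  have hL : ZMod.LFunction (1 : DirichletCharacter ℂ N) s = E s * riemannZeta s :=
    LFunctionTrivChar_eq_mul_riemannZeta hs
  have hcard : ∑ j : ZMod N, (1 : DirichletCharacter ℂ N) j = N.totient := by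
    rw [MulChar.sum_one_eq_card_units, ZMod.card_units_eq_totient]
  rw [hL, hcard, Pi.div_apply, slope_def_field, hD1]
  simp only [D, g]
  ring

lemma exists_pos_eq_LFunction_one_apply_one (hN : 4 ≤ N) :
    ∃ t : ℝ, 0 < t ∧ (1 : DirichletCharacter ℂ N).LFunction 1 = t := by
  refine ⟨N.totient / N * ((Real.eulerMascheroniConstant - Real.log (4 * Real.pi)) / 2 +
    (Real.log N + ∑ p ∈ N.primeFactors, Real.log p / (p - 1))), ?_, ?_⟩
  · have : 0 < N.totient := Nat.totient_pos.mpr (NeZero.pos N)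
    have : 0 < N := NeZero.pos N
    have hlog : Real.log (4 * Real.pi) ≤ 2 * Real.log N := by
      rw [show 2 * Real.log N = Real.log (N ^ 2) by simp]
      refine Real.log_le_log (by positivity) ?_
      have : (4 : ℝ) ≤ N := mod_cast hN
      nlinarith [Real.pi_lt_four]
    have hsum : 0 ≤ ∑ p ∈ N.primeFactors, Real.log p / (p - 1) :=
      Finset.sum_nonneg fun p hp ↦ div_nonneg (Real.log_natCast_nonneg p) <|
        sub_nonneg.mpr <| mod_cast (Nat.prime_of_mem_primeFactors hp).one_le
    have := Real.one_half_lt_eulerMascheroniConstant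
    exact mul_pos (by positivity) (by linarith)
  · rw [LFunction_one_apply_one, riemannZeta_one]
    push_cast [natCast_log, ofReal_log (show 0 ≤ 4 * Real.pi by positivity)]
    rfl

end TrivialCharacter

section Residue

open Metric
open scoped ComplexOrder

variable {q₁ q₂ : ℕ} [NeZero q₁] [NeZero q₂]

/-- The entire function `(s - 1) f(s)`, where `f(s) = ζ(s) L(s, χ₁) L(s, χ₂) L(s, χ₁χ₂)`. -/
noncomputable def goldfeldFun₁ (χ₁ : DirichletCharacter ℂ q₁) (χ₂ : DirichletCharacter ℂ q₂)
    (s : ℂ) : ℂ :=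
  riemannZeta₁ s * LFunctionProd χ₁ χ₂ s

variable {χ₁ : DirichletCharacter ℂ q₁} {χ₂ : DirichletCharacter ℂ q₂}

lemma goldfeldFun₁_one : goldfeldFun₁ χ₁ χ₂ 1 = LFunctionProd χ₁ χ₂ 1 := by
  rw [goldfeldFun₁, riemannZeta₁_one, one_mul]

lemma goldfeldFun₁_eq_mul_LSeries {s : ℂ} (hs : 1 < s.re) :
    goldfeldFun₁ χ₁ χ₂ s = (s - 1) * LSeries (goldfeldCoeff χ₁ χ₂) s := by
  have hs1 : s ≠ 1 := fun h ↦ by simp [h] at hs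
  rw [(LSeriesHasSum_goldfeldCoeff χ₁ χ₂ hs).LSeries_eq, riemannZeta_eq_inv_sub_mul hs1,
    goldfeldFun₁, mul_assoc (s - 1)⁻¹, mul_inv_cancel_left₀ (sub_ne_zero.mpr hs1)]

lemma one_le_LSeries_goldfeldCoeff_two (hχ₁ : χ₁ ^ 2 = 1) (hχ₂ : χ₂ ^ 2 = 1) :
    1 ≤ LSeries (goldfeldCoeff χ₁ χ₂) 2 := by
  have hsum := (LSeriesHasSum_goldfeldCoeff χ₁ χ₂ (s := (2 : ℝ)) (by simp)).LSeriesSummable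
  simpa [(isMultiplicative_goldfeldCoeff χ₁ χ₂).map_one] using
    apply_one_le_LSeries (goldfeldCoeff_nonneg hχ₁ hχ₂) hsum

section

variable (h₁ : χ₁ ≠ 1) (h₂ : χ₂ ≠ 1) (h : prodChar χ₁ χ₂ ≠ 1)

include h₁ h₂ h

lemma differentiable_LFunctionProd : Differentiable ℂ (LFunctionProd χ₁ χ₂) :=
  ((differentiable_LFunction h₁).mul (differentiable_LFunction h₂)).mul
    (differentiable_LFunction h)

lemma differentiable_goldfeldFun₁ : Differentiable ℂ (goldfeldFun₁ χ₁ χ₂) :=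
  differentiable_riemannZeta₁.mul (differentiable_LFunctionProd h₁ h₂ h)

lemma ofReal_re_LFunctionProd (hχ₁ : χ₁ ^ 2 = 1) (hχ₂ : χ₂ ^ 2 = 1) (x : ℝ) :
    ((LFunctionProd χ₁ χ₂ x).re : ℂ) = LFunctionProd χ₁ χ₂ x := by
  rw [LFunctionProd, ← ofReal_re_LFunction h₁ hχ₁, ← ofReal_re_LFunction h₂ hχ₂,
    ← ofReal_re_LFunction h (prodChar_sq hχ₁ hχ₂), ← ofReal_mul, ← ofReal_mul, ofReal_re]

lemma norm_LFunctionProd_le {s : ℂ} (hs : 0 < s.re) :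
    ‖LFunctionProd χ₁ χ₂ s‖ ≤ (‖s‖ / s.re) ^ 3 * (q₁ * q₂) ^ 2 := by
  calc ‖LFunctionProd χ₁ χ₂ s‖
      = ‖χ₁.LFunction s‖ * ‖χ₂.LFunction s‖ * ‖(prodChar χ₁ χ₂).LFunction s‖ := by
        rw [LFunctionProd, norm_mul, norm_mul]
    _ ≤ (‖s‖ / s.re * q₁) * (‖s‖ / s.re * q₂) * (‖s‖ / s.re * (q₁ * q₂ : ℕ)) := by
        gcongr <;> exact norm_LFunction_le ‹_› hs
    _ = (‖s‖ / s.re) ^ 3 * (q₁ * q₂) ^ 2 := by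
        push_cast
        ring

lemma norm_dslope_goldfeldFun₁_le {s : ℂ} (hs : 0 < s.re) (hs1 : s ≠ 1) :
    ‖dslope (goldfeldFun₁ χ₁ χ₂) 1 s‖ ≤
      (‖riemannZeta₁ s‖ * (‖s‖ / s.re) ^ 3 + 1) / ‖s - 1‖ * (q₁ * q₂) ^ 2 := by
  have hs_le := norm_LFunctionProd_le h₁ h₂ h hs
  have hone_le := norm_LFunctionProd_le h₁ h₂ h (s := 1) (by simp)
  rw [norm_one, one_re, div_one, one_pow, one_mul] at hone_le
  rw [dslope_of_ne _ hs1, slope_def_field, norm_div, div_mul_eq_mul_div]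
  gcongr
  calc ‖goldfeldFun₁ χ₁ χ₂ s - goldfeldFun₁ χ₁ χ₂ 1‖
      ≤ ‖riemannZeta₁ s‖ * ‖LFunctionProd χ₁ χ₂ s‖ + ‖LFunctionProd χ₁ χ₂ 1‖ := by
        rw [goldfeldFun₁_one, goldfeldFun₁, ← norm_mul]
        exact norm_sub_le _ _
    _ ≤ ‖riemannZeta₁ s‖ * ((‖s‖ / s.re) ^ 3 * (q₁ * q₂) ^ 2) + (q₁ * q₂) ^ 2 := by gcongr
    _ = (‖riemannZeta₁ s‖ * (‖s‖ / s.re) ^ 3 + 1) * (q₁ * q₂) ^ 2 := by ring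

end

lemma exists_norm_dslope_goldfeldFun₁_le {R : ℝ} (hR : 1 < R) (hR2 : R < 2) :
    ∃ K : ℝ, 1 ≤ K ∧ ∀ {q₁ q₂ : ℕ} [NeZero q₁] [NeZero q₂] {χ₁ : DirichletCharacter ℂ q₁}
      {χ₂ : DirichletCharacter ℂ q₂}, χ₁ ≠ 1 → χ₂ ≠ 1 → prodChar χ₁ χ₂ ≠ 1 →
      ∀ z ∈ sphere (2 : ℂ) R, ‖dslope (goldfeldFun₁ χ₁ χ₂) 1 z‖ ≤ K * (q₁ * q₂) ^ 2 := by
  have hre {z : ℂ} (hz : z ∈ sphere (2 : ℂ) R) : 0 < z.re := by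
    have hz' := (neg_le_abs _).trans (abs_re_le_norm (z - 2))
    rw [mem_sphere_iff_norm.mp hz, sub_re, re_ofNat] at hz'
    linarith
  have hne {z : ℂ} (hz : z ∈ sphere (2 : ℂ) R) : z ≠ 1 := by
    rintro rfl
    rw [mem_sphere_iff_norm] at hz
    norm_num at hz
    linarith
  have hcont : ContinuousOn (fun z : ℂ ↦
      (‖riemannZeta₁ z‖ * (‖z‖ / z.re) ^ 3 + 1) / ‖z - 1‖) (sphere 2 R) := by
    have hζ := differentiable_riemannZeta₁.continuous
    refine ContinuousOn.div (((hζ.norm.continuousOn.mul ((continuousOn_id.norm.div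
      continuous_re.continuousOn fun z hz ↦ (hre hz).ne').pow 3))).add continuousOn_const)
      (by fun_prop) fun z hz ↦ norm_ne_zero_iff.mpr (sub_ne_zero.mpr (hne hz))
  obtain ⟨K, hK⟩ := (isCompact_sphere (2 : ℂ) R).exists_bound_of_continuousOn hcont
  refine ⟨max 1 K, le_max_left _ _, fun h₁ h₂ h z hz ↦ ?_⟩
  refine (norm_dslope_goldfeldFun₁_le h₁ h₂ h (hre hz) (hne hz)).trans ?_
  gcongr
  exact (le_abs_self _).trans ((hK z hz).trans (le_max_right _ _))

-- The hypothesis is applied to the first exponent `M` with `2 * Q / (1 - ρ) * ρ ^ M < 1`.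
lemma mul_rpow_neg_lt_of_forall_one_sub_geom_le {y ρ ε Q δ lam : ℝ} (hy : 0 < y) (hρ : 0 < ρ)
    (hρ1 : ρ < 1) (hε : 0 ≤ ε) (hyρ : y * ρ ^ ε ≤ 1) (hQ : 1 ≤ 2 * Q / (1 - ρ)) (hδ : 0 < δ)
    (h : ∀ M ≠ 0, 1 - Q * ρ ^ M / (1 - ρ) ≤ lam * y ^ M / δ) :
    δ / (2 * y) * (2 * Q / (1 - ρ)) ^ (-ε) < lam := by
  set A := 2 * Q / (1 - ρ) with hA
  have hApos : 0 < A := one_pos.trans_le hQ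
  obtain ⟨n, hn_lt, hn_le⟩ :=
    exists_nat_pow_near_of_lt_one (inv_pos.mpr hApos) (inv_le_one_of_one_le₀ hQ) hρ hρ1
  have hhalf : 1 / 2 < lam * y ^ (n + 1) / δ := by
    have hA_lt : A * ρ ^ (n + 1) < 1 := by rwa [lt_inv_comm₀ (by positivity) hApos, ← one_div,
      lt_div_iff₀ (by positivity)] at hn_lt
    have hA_eq : A * ρ ^ (n + 1) = 2 * (Q * ρ ^ (n + 1) / (1 - ρ)) := by rw [hA]; ring
    linarith [h (n + 1) n.succ_ne_zero]
  have hlam_y : δ / (2 * y) < lam * y ^ n := by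
    rw [lt_div_iff₀ hδ, pow_succ] at hhalf
    rw [div_lt_iff₀ (by positivity)]
    linarith
  have hy_pow : y ^ n * A ^ (-ε) ≤ 1 :=
    calc y ^ n * A ^ (-ε) = y ^ n * A⁻¹ ^ ε := by
          rw [Real.rpow_neg hApos.le, Real.inv_rpow hApos.le]
      _ ≤ y ^ n * (ρ ^ n) ^ ε := by gcongr
      _ = (y * ρ ^ ε) ^ n := by rw [mul_pow, Real.rpow_pow_comm hρ.le]
      _ ≤ 1 := pow_le_one₀ (by positivity) hyρ
  have hlam : 0 < lam := pos_of_mul_pos_left ((by positivity : 0 < δ / (2 * y)).trans hlam_y)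
    (by positivity)
  calc δ / (2 * y) * A ^ (-ε) < lam * y ^ n * A ^ (-ε) := by gcongr
    _ ≤ lam := by
      rw [mul_assoc]
      exact mul_le_of_le_one_right hlam.le hy_pow

theorem exists_forall_mul_rpow_lt_residue (h₁ : χ₁ ≠ 1) (hχ₁ : χ₁ ^ 2 = 1) {ε β R : ℝ}
    (hε : 0 ≤ ε) (hR : 1 < R) (hR2 : R < 2) (hβ : β < 1) (hβR : 2 - β < R)
    (hβε : (2 - β) * ((2 - β) / R) ^ ε ≤ 1) :
    ∃ C : ℝ, 0 < C ∧ ∀ {q₂ : ℕ} [NeZero q₂] {χ₂ : DirichletCharacter ℂ q₂}, χ₂ ≠ 1 → χ₂ ^ 2 = 1 →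
      prodChar χ₁ χ₂ ≠ 1 → 0 ≤ (goldfeldFun₁ χ₁ χ₂ β).re →
      C * (q₂ : ℝ) ^ (-(2 * ε)) < (LFunctionProd χ₁ χ₂ 1).re := by
  obtain ⟨K, hK1, hK⟩ := exists_norm_dslope_goldfeldFun₁_le hR hR2
  have hy : 0 < 2 - β := by linarith
  set ρ := (2 - β) / R
  have hρ : 0 < ρ := by positivity
  have hρ1 : ρ < 1 := (div_lt_one (by positivity)).mpr hβR
  have hρ1' : 0 < 1 - ρ := sub_pos.mpr hρ1
  have hq₁ : (1 : ℝ) ≤ q₁ := mod_cast NeZero.one_le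
  refine ⟨(1 - β) / (2 * (2 - β)) * (2 * (K * q₁ ^ 2) / (1 - ρ)) ^ (-ε), ?_, ?_⟩
  · have : 0 < 1 - β := sub_pos.mpr hβ
    positivity
  intro q₂ _ χ₂ h₂ hχ₂ h hH
  have hq₂ : (1 : ℝ) ≤ q₂ := mod_cast NeZero.one_le
  have hres := ofReal_re_LFunctionProd h₁ h₂ h hχ₁ hχ₂ 1
  rw [ofReal_one] at hres
  have hQ : 1 ≤ 2 * (K * (q₁ * q₂) ^ 2) / (1 - ρ) := by
    rw [one_le_div hρ1']
    have : 1 ≤ K * (q₁ * q₂) ^ 2 :=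
      one_le_mul_of_one_le_of_one_le hK1 (one_le_pow₀ (one_le_mul_of_one_le_of_one_le hq₁ hq₂))
    linarith
  have hlt := mul_rpow_neg_lt_of_forall_one_sub_geom_le hy hρ hρ1 hε hβε hQ (sub_pos.mpr hβ)
    fun M hM ↦ one_sub_le_residue_mul (goldfeldCoeff_nonneg hχ₁ hχ₂)
      (one_le_LSeries_goldfeldCoeff_two hχ₁ hχ₂) (abscissaOfAbsConv_goldfeldCoeff_le χ₁ χ₂)
      (differentiable_goldfeldFun₁ h₁ h₂ h) (goldfeldFun₁_one.trans hres.symm)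
      (fun s hs ↦ goldfeldFun₁_eq_mul_LSeries hs) hβ hβR hH (hK h₁ h₂ h) hM
  have hsplit : (2 * (K * (q₁ * q₂) ^ 2) / (1 - ρ)) ^ (-ε) =
      (2 * (K * q₁ ^ 2) / (1 - ρ)) ^ (-ε) * (q₂ : ℝ) ^ (-(2 * ε)) := by
    rw [← mul_neg, Real.rpow_mul (by positivity), Real.rpow_two,
      ← Real.mul_rpow (by positivity) (by positivity)]
    ring_nf
  rwa [hsplit, ← mul_assoc] at hlt

end Residue

section ExceptionalZero

variable {q : ℕ}

lemma one_lt_of_ne_one [NeZero q] {χ : DirichletCharacter ℂ q} (hχ : χ ≠ 1) : 1 < q := by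
  by_contra! hq
  obtain rfl : q = 1 := le_antisymm hq NeZero.one_le
  exact hχ (level_one χ)

lemma one_sub_apply_mul_cpow_neg_ne_zero (χ : DirichletCharacter ℂ q) {p : ℕ} (hp : 1 < p)
    {s : ℂ} (hs : 0 < s.re) : 1 - χ p * (p : ℂ) ^ (-s) ≠ 0 := by
  have hlt : ‖χ p * (p : ℂ) ^ (-s)‖ < 1 := by
    rw [norm_mul, norm_natCast_cpow_of_pos (one_pos.trans hp), neg_re]
    exact mul_lt_one_of_nonneg_of_lt_one_right (χ.norm_le_one p) (by positivity)
      (Real.rpow_lt_one_of_one_lt_of_neg (mod_cast hp) (neg_neg_of_pos hs))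
  exact sub_ne_zero.mpr fun heq ↦ by simp [← heq] at hlt

lemma primitiveCharacter_ne_one {χ : DirichletCharacter ℂ q} (hχ : χ ≠ 1) :
    χ.primitiveCharacter ≠ 1 := fun h ↦
  hχ (by rw [← changeLevel_primitiveCharacter χ, h, map_one])

lemma primitiveCharacter_sq [NeZero q] {χ : DirichletCharacter ℂ q} (hχ : χ ^ 2 = 1) :
    χ.primitiveCharacter ^ 2 = 1 :=
  have : NeZero χ.conductor := ⟨χ.conductor_ne_zero⟩
  changeLevel_injective χ.conductor_dvd_level <| by
    rw [map_pow, changeLevel_primitiveCharacter, hχ, map_one]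

lemma LFunction_primitiveCharacter_eq_zero_iff [NeZero q] {χ : DirichletCharacter ℂ q}
    [NeZero χ.conductor] (hχ : χ ≠ 1) {s : ℂ} (hs : 0 < s.re) :
    χ.primitiveCharacter.LFunction s = 0 ↔ χ.LFunction s = 0 := by
  have hlevel := LFunction_changeLevel χ.conductor_dvd_level χ.primitiveCharacter (s := s)
    (.inl (primitiveCharacter_ne_one hχ))
  have hprod : ∏ p ∈ q.primeFactors, (1 - χ.primitiveCharacter p * (p : ℂ) ^ (-s)) ≠ 0 :=
    Finset.prod_ne_zero_iff.mpr fun p hp ↦ one_sub_apply_mul_cpow_neg_ne_zero _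
      (Nat.prime_of_mem_primeFactors hp).one_lt hs
  rw [changeLevel_primitiveCharacter] at hlevel
  rw [hlevel, mul_eq_zero_iff_right hprod]

lemma exists_isPrimitive_quadratic_mod_three :
    ∃ χ : DirichletCharacter ℂ 3, χ.IsPrimitive ∧ χ ≠ 1 ∧ χ ^ 2 = 1 := by
  let χ : DirichletCharacter ℂ 3 := (quadraticChar (ZMod 3)).ringHomComp (Int.castRingHom ℂ)
  have hχ : χ ≠ 1 := (MulChar.ringHomComp_ne_one_iff Int.cast_injective).mpr <|
    quadraticChar_ne_one (by rw [ZMod.ringChar_zmod_n]; norm_num)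
  have hcond : χ.conductor = 3 :=
    ((Nat.dvd_prime Nat.prime_three).mp χ.conductor_dvd_level).resolve_left
      (eq_one_iff_conductor_eq_one.not.mp hχ)
  exact ⟨χ, (isPrimitive_def χ).mpr hcond, hχ,
    ((quadraticChar_isQuadratic (ZMod 3)).comp (Int.castRingHom ℂ)).sq_eq_one⟩

variable {q₁ q₂ : ℕ} [NeZero q₁] [NeZero q₂]
  {χ₁ : DirichletCharacter ℂ q₁} {χ₂ : DirichletCharacter ℂ q₂}

open scoped ComplexOrder in
lemma re_LFunctionProd_two_pos (h₁ : χ₁ ≠ 1) (hχ₁ : χ₁ ^ 2 = 1) (h₂ : χ₂ ≠ 1)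
    (hχ₂ : χ₂ ^ 2 = 1) (h : prodChar χ₁ χ₂ ≠ 1) : 0 < (LFunctionProd χ₁ χ₂ 2).re := by
  have hres := ofReal_re_LFunctionProd h₁ h₂ h hχ₁ hχ₂ 2
  rw [ofReal_ofNat] at hres
  have hpos : 0 < LSeries (goldfeldCoeff χ₁ χ₂) 2 :=
    one_pos.trans_le (one_le_LSeries_goldfeldCoeff_two hχ₁ hχ₂)
  have hval : LSeries (goldfeldCoeff χ₁ χ₂) 2 =
      ((Real.pi ^ 2 / 6 * (LFunctionProd χ₁ χ₂ 2).re : ℝ) : ℂ) := by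
    rw [(LSeriesHasSum_goldfeldCoeff χ₁ χ₂ (by simp)).LSeries_eq, riemannZeta_two]
    push_cast [hres]
    rfl
  rw [hval] at hpos
  exact (mul_pos_iff_of_pos_left (by positivity)).mp (zero_lt_real.mp hpos)

lemma re_LFunctionProd_pos (h₁ : χ₁ ≠ 1) (hχ₁ : χ₁ ^ 2 = 1) (h₂ : χ₂ ≠ 1) (hχ₂ : χ₂ ^ 2 = 1)
    (h : prodChar χ₁ χ₂ ≠ 1) {β : ℝ} (hβ : β ≤ 2)
    (hne : ∀ x : ℝ, β ≤ x → LFunctionProd χ₁ χ₂ x ≠ 0) : 0 < (LFunctionProd χ₁ χ₂ β).re := by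
  have hcont : Continuous fun x : ℝ ↦ (LFunctionProd χ₁ χ₂ x).re := continuous_re.comp
    ((differentiable_LFunctionProd h₁ h₂ h).continuous.comp continuous_ofReal)
  by_contra! hle
  obtain ⟨x, hx, hx0⟩ := intermediate_value_Icc hβ hcont.continuousOn
    ⟨hle, by simpa using (re_LFunctionProd_two_pos h₁ hχ₁ h₂ hχ₂ h).le⟩
  exact hne x hx.1 (by
    rw [← ofReal_re_LFunctionProd h₁ h₂ h hχ₁ hχ₂, show (LFunctionProd χ₁ χ₂ x).re = 0 from hx0,
      ofReal_zero])

theorem exists_quadratic_forall_re_goldfeldFun₁_nonneg {b : ℝ} (hb : 0 < b) (hb1 : b < 1)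
    (hζ : 0 ≤ (riemannZeta₁ b).re) :
    ∃ (q₁ : ℕ) (_ : NeZero q₁) (χ₁ : DirichletCharacter ℂ q₁), χ₁.IsPrimitive ∧ χ₁ ≠ 1 ∧
      χ₁ ^ 2 = 1 ∧ ∃ β ∈ Ico b 1, ∀ {q₂ : ℕ} [NeZero q₂] {χ₂ : DirichletCharacter ℂ q₂},
        χ₂ ≠ 1 → χ₂ ^ 2 = 1 → prodChar χ₁ χ₂ ≠ 1 → 0 ≤ (goldfeldFun₁ χ₁ χ₂ β).re := by
  by_cases hzero : ∃ (q : ℕ) (_ : NeZero q) (χ : DirichletCharacter ℂ q) (β : ℝ), χ ≠ 1 ∧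
      χ ^ 2 = 1 ∧ β ∈ Ico b 1 ∧ χ.LFunction β = 0
  · obtain ⟨q, _, χ, β, hχ, hχ2, hβ, hχβ⟩ := hzero
    have hcond : NeZero χ.conductor := ⟨χ.conductor_ne_zero⟩
    refine ⟨_, hcond, χ.primitiveCharacter, χ.primitiveCharacter_isPrimitive,
      primitiveCharacter_ne_one hχ, primitiveCharacter_sq hχ2, β, hβ, fun _ _ _ ↦ ?_⟩
    have hprim := (LFunction_primitiveCharacter_eq_zero_iff hχ (s := β)
      (by simpa using hb.trans_le hβ.1)).mpr hχβ
    simp [goldfeldFun₁, LFunctionProd, hprim]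
  · obtain ⟨χ₁, hprim, h₁, hχ₁⟩ := exists_isPrimitive_quadratic_mod_three
    refine ⟨3, inferInstance, χ₁, hprim, h₁, hχ₁, b, ⟨le_rfl, hb1⟩, fun {q₂} _ χ₂ h₂ hχ₂ h ↦ ?_⟩
    have hne {q : ℕ} [NeZero q] {χ : DirichletCharacter ℂ q} (hχ : χ ≠ 1) (hχ2 : χ ^ 2 = 1)
        {x : ℝ} (hx : b ≤ x) : χ.LFunction x ≠ 0 := fun hχx ↦
      (lt_or_ge x 1).elim (fun hx1 ↦ hzero ⟨q, _, χ, x, hχ, hχ2, ⟨hx, hx1⟩, hχx⟩)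
        fun hx1 ↦ LFunction_ne_zero_of_one_le_re χ (.inl hχ) (by simpa using hx1) hχx
    have hpos := re_LFunctionProd_pos h₁ hχ₁ h₂ hχ₂ h (hb1.trans one_lt_two).le fun x hx ↦
      mul_ne_zero (mul_ne_zero (hne h₁ hχ₁ hx) (hne h₂ hχ₂ hx)) (hne h (prodChar_sq hχ₁ hχ₂) hx)
    rw [goldfeldFun₁, ← ofReal_re_LFunctionProd h₁ h₂ h hχ₁ hχ₂, re_mul_ofReal]
    exact mul_nonneg hζ hpos.le

end ExceptionalZero

section LowerBound

variable {q₁ q₂ : ℕ} [NeZero q₁] [NeZero q₂]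
  {χ₁ : DirichletCharacter ℂ q₁} {χ₂ : DirichletCharacter ℂ q₂}

lemma level_eq_and_LFunction_eq_of_prodChar_eq_one (hp₁ : χ₁.IsPrimitive) (hp₂ : χ₂.IsPrimitive)
    (hχ₂ : χ₂ ^ 2 = 1) (h : prodChar χ₁ χ₂ = 1) :
    q₁ = q₂ ∧ χ₁.LFunction = χ₂.LFunction := by
  have heq : changeLevel (dvd_mul_right q₁ q₂) χ₁ = changeLevel (dvd_mul_left q₂ q₁) χ₂ :=
    mul_right_cancel (h.trans (by rw [← sq, ← map_pow, hχ₂, map_one]))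
  have hq : q₁ = q₂ := by
    simpa only [conductor_changeLevel, (isPrimitive_def _).mp hp₁, (isPrimitive_def _).mp hp₂]
      using congrArg conductor heq
  subst hq
  exact ⟨rfl, congrArg _ (changeLevel_injective _ heq)⟩

lemma exists_pos_LFunctionProd_eq_of_prodChar_eq_one (hp₁ : χ₁.IsPrimitive) (h₁ : χ₁ ≠ 1)
    (hχ₁ : χ₁ ^ 2 = 1) :
    ∃ t : ℝ, 0 < t ∧ ∀ {q₂ : ℕ} [NeZero q₂] {χ₂ : DirichletCharacter ℂ q₂}, χ₂.IsPrimitive →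
      χ₂ ^ 2 = 1 → prodChar χ₁ χ₂ = 1 → LFunctionProd χ₁ χ₂ 1 = t := by
  obtain ⟨t, ht, ht_eq⟩ := exists_pos_eq_LFunction_one_apply_one (N := q₁ * q₁)
    (Nat.mul_le_mul (one_lt_of_ne_one h₁) (one_lt_of_ne_one h₁))
  have hres := ofReal_re_LFunction h₁ hχ₁ 1
  rw [ofReal_one] at hres
  have hne : (χ₁.LFunction 1).re ≠ 0 := fun h ↦
    LFunction_apply_one_ne_zero h₁ (by rw [← hres, h, ofReal_zero])
  refine ⟨(χ₁.LFunction 1).re ^ 2 * t, by positivity, fun {q₂} _ χ₂ hp₂ hχ₂ h ↦ ?_⟩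
  obtain ⟨rfl, hL⟩ := level_eq_and_LFunction_eq_of_prodChar_eq_one hp₁ hp₂ hχ₂ h
  rw [LFunctionProd, h, ht_eq, ← hL]
  push_cast [hres]
  ring

lemma exists_forall_Ico_near_one {ε R : ℝ} (hε : 0 < ε) (hR : 1 < R) :
    ∃ b : ℝ, 0 < b ∧ b < 1 ∧ 0 ≤ (riemannZeta₁ b).re ∧ ∀ β ∈ Ico b 1,
      2 - β < R ∧ (2 - β) * ((2 - β) / R) ^ ε ≤ 1 := by
  have hpow : (2 - 1) * ((2 - 1) / R) ^ ε < 1 := by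
    rw [show (2 - 1 : ℝ) = 1 by norm_num, one_mul]
    exact Real.rpow_lt_one (by positivity) ((div_lt_one (by positivity)).mpr hR) hε
  have hζ : ContinuousAt (fun β : ℝ ↦ (riemannZeta₁ β).re) 1 :=
    (continuous_re.comp (differentiable_riemannZeta₁.continuous.comp
      continuous_ofReal)).continuousAt
  have hy : ContinuousAt (fun β : ℝ ↦ 2 - β) 1 := by fun_prop
  have hnear : ∀ᶠ β : ℝ in 𝓝 1, 0 < β ∧ 0 ≤ (riemannZeta₁ β).re ∧ 2 - β < R ∧
      (2 - β) * ((2 - β) / R) ^ ε ≤ 1 := by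
    refine (lt_mem_nhds one_pos).and (.and ?_ (.and ?_ ?_))
    · exact (hζ.eventually_const_lt (by simp)).mono fun _ ↦ le_of_lt
    · exact hy.eventually_lt_const (by linarith)
    · exact ((hy.mul ((hy.div_const R).rpow_const (.inr hε.le))).eventually_lt_const hpow).mono
        fun _ ↦ le_of_lt
  obtain ⟨l, hl, hl_near⟩ := exists_Ioc_subset_of_mem_nhds hnear ⟨0, one_pos⟩
  obtain ⟨b, hlb, hb1⟩ := exists_between hl
  have hb := hl_near ⟨hlb, hb1.le⟩
  exact ⟨b, hb.1, hb1, hb.2.1, fun β hβ ↦ (hl_near ⟨hlb.trans_le hβ.1, hβ.2.le⟩).2.2⟩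

end LowerBound

end Goldfeld

open Goldfeld in
theorem goldfeld_lambda_lower_bound_general (ε : ℝ) (hε : 0 < ε) :
    ∃ C : ℝ, 0 < C ∧ ∃ (q₁ : ℕ) (_ : NeZero q₁) (χ₁ : DirichletCharacter ℂ q₁),
      χ₁.IsPrimitive ∧ χ₁ ≠ 1 ∧ χ₁ ^ 2 = 1 ∧
        ∀ (q₂ : ℕ) [NeZero q₂] (χ₂ : DirichletCharacter ℂ q₂),
          (χ₂.IsPrimitive ∨ prodChar χ₁ χ₂ ≠ 1) → χ₂ ≠ 1 → χ₂ ^ 2 = 1 →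
            ∃ r : ℝ, LFunctionProd χ₁ χ₂ 1 = (r : ℂ) ∧ C * (q₂ : ℝ) ^ (-(2 * ε)) < r := by
  have hR : (1 : ℝ) < 3 / 2 := by norm_num
  obtain ⟨b, hb, hb1, hζ, hnear⟩ := exists_forall_Ico_near_one hε hR
  obtain ⟨q₁, _, χ₁, hp₁, h₁, hχ₁, β, hβ, hnonneg⟩ :=
    exists_quadratic_forall_re_goldfeldFun₁_nonneg hb hb1 hζ
  obtain ⟨C, hC, hgeneric⟩ := exists_forall_mul_rpow_lt_residue h₁ hχ₁ hε.le hR (by norm_num)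
    hβ.2 (hnear β hβ).1 (hnear β hβ).2
  obtain ⟨t, ht, hdiag⟩ := exists_pos_LFunctionProd_eq_of_prodChar_eq_one hp₁ h₁ hχ₁
  refine ⟨min C (t / 2), lt_min hC (half_pos ht), q₁, inferInstance, χ₁, hp₁, h₁, hχ₁,
    fun q₂ _ χ₂ hp₂ h₂ hχ₂ ↦ ?_⟩
  by_cases h : prodChar χ₁ χ₂ = 1
  · refine ⟨t, hdiag (hp₂.resolve_right (not_not.mpr h)) hχ₂ h, ?_⟩
    calc min C (t / 2) * (q₂ : ℝ) ^ (-(2 * ε)) ≤ t / 2 * 1 := by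
          gcongr
          · exact min_le_right _ _
          · exact Real.rpow_le_one_of_one_le_of_nonpos (mod_cast NeZero.one_le) (by linarith)
      _ < t := by linarith
  · refine ⟨_, (by simpa using (ofReal_re_LFunctionProd h₁ h₂ h hχ₁ hχ₂ 1).symm), ?_⟩
    refine lt_of_le_of_lt ?_ (hgeneric h₂ hχ₂ h (hnonneg h₂ hχ₂ h))
    gcongr
    exact min_le_left _ _

/-- For every `0 < ε < 1/3` there are `C(ε) > 0` and a primitive quadratic character `χ₁`
mod some `q₁ > 1` such that for every primitive quadratic `χ₂` mod any `q₂ > 1`, the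
residue `λ = L(1,χ₁) L(1,χ₂) L(1,χ₁χ₂)` of `f` at `s = 1` is a real number exceeding
`C(ε) * q₂ ^ (-2ε)`. -/
theorem goldfeld_lambda_lower_bound (ε : ℝ) (hε : 0 < ε) (hε' : ε < 1 / 3) :
    ∃ C : ℝ, 0 < C ∧
      ∃ (q₁ : ℕ) (hq₁ : 1 < q₁),
        haveI : NeZero q₁ := ⟨by omega⟩
        ∃ χ₁ : DirichletCharacter ℂ q₁,
          χ₁.IsPrimitive ∧ χ₁ ≠ 1 ∧ χ₁ ^ 2 = 1 ∧
          ∀ (q₂ : ℕ) (hq₂ : 1 < q₂),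
            haveI : NeZero q₂ := ⟨by omega⟩
            ∀ χ₂ : DirichletCharacter ℂ q₂,
              χ₂.IsPrimitive → χ₂ ≠ 1 → χ₂ ^ 2 = 1 →
                ∃ r : ℝ,
                  χ₁.LFunction 1 * χ₂.LFunction 1 *
                    (changeLevel (dvd_mul_right q₁ q₂) χ₁ *
                      changeLevel (dvd_mul_left q₂ q₁) χ₂).LFunction 1 = (r : ℂ) ∧
                  C * (q₂ : ℝ) ^ (-(2 * ε)) < r := by
  obtain ⟨C, hC, q₁, _, χ₁, hp₁, h₁, hχ₁, h⟩ := goldfeld_lambda_lower_bound_general ε hε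
  refine ⟨C, hC, q₁, Goldfeld.one_lt_of_ne_one h₁, χ₁, hp₁, h₁, hχ₁, fun q₂ hq₂ χ₂ hp₂ ↦ ?_⟩
  have : NeZero q₂ := ⟨by omega⟩
  exact h q₂ χ₂ (.inl hp₂)
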